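/- Almost sure simplicity of the many-body spectrum: let Λ be a finite rectangular box in ℤ^ν with N = |Λ| sites and h₀ its graph Laplacian. For Lebesgue-almost every k ∈ (0,∞)^Λ, the map ℕ₀^N → ℝ, α ↦ Σ_{j=1}^N γ_j(k)(2α_j + 1), is injective, where γ₁(k),…,γ_N(k) are the positive square roots of the eigenvalues of h₀ + diag(k) (counted with multiplicity). Equivalently, for almost every k the family (γ₁(k),…,γ_N(k)) is linearly independent over ℚ; this expresses that the oscillator Hamiltonian H(k) = Σ_x p_x² + q^T(h₀+k)q has simple spectrum for almost every k. -/

import Mathlib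

open MeasureTheory Matrix Finset

noncomputable section

namespace OscLoc

attribute [local instance 10] Classical.propDecidable

/-- The `ℓ¹`-distance on `ℤ^ν`. -/
def dist1 {ν : ℕ} (x y : Fin ν → ℤ) : ℕ := ∑ i, (x i - y i).natAbs

theorem dist1_comm {ν : ℕ} (x y : Fin ν → ℤ) : dist1 x y = dist1 y x :=
  Finset.sum_congr rfl fun i _ => by omega

variable {ν : ℕ}

/-- The sites of the rectangular box `[a₁,b₁] × … × [a_ν,b_ν] ⊂ ℤ^ν`. -/
abbrev Box (a b : Fin ν → ℤ) : Type _ := {x : Fin ν → ℤ // x ∈ Finset.Icc a b}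

variable (a b : Fin ν → ℤ)

/-- The graph Laplacian `h₀ = h_{0,Λ}` on `ℓ²(Λ)`, as a matrix. -/
def h0 : Matrix (Box a b) (Box a b) ℝ := fun x y =>
  if x = y then ((Finset.univ.filter fun z : Box a b => dist1 x.1 z.1 = 1).card : ℝ)
  else if dist1 x.1 y.1 = 1 then -1 else 0

/-- The effective one-particle Anderson Hamiltonian `h_Λ = h₀ + k`. -/
def effH (k : Box a b → ℝ) : Matrix (Box a b) (Box a b) ℝ := h0 a b + Matrix.diagonal k

theorem h0_isHermitian : (h0 a b).IsHermitian := by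
  show (h0 a b)ᴴ = h0 a b
  ext x y
  simp only [Matrix.conjTranspose_apply, star_trivial, h0]
  by_cases hxy : x = y
  · subst hxy; rfl
  · simp [hxy, Ne.symm hxy, dist1_comm x.1 y.1]

theorem effH_isHermitian (k : Box a b → ℝ) : (effH a b k).IsHermitian :=
  (h0_isHermitian a b).add (Matrix.isHermitian_diagonal k)

variable (k : Box a b → ℝ)

/-- The eigenvalues `γ_j²` of `h_Λ = h₀ + k`, counted with multiplicity. -/
def eigval : Box a b → ℝ := (effH_isHermitian a b k).eigenvalues

/-- `γ_j`, the positive square roots of the eigenvalues of `h_Λ`. -/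
def gam (j : Box a b) : ℝ := Real.sqrt (eigval a b k j)

/-!
The potentials are cut into parallel lines: by Fubini, a measurable set that meets every line in a
fixed direction in a countable set is null.

*Simple spectrum.* Move in the direction of a potential `v` with distinct entries. The matrix
`s • A + diag v` has simple spectrum at `s = 0`, so its discriminant is a nonzero polynomial in `s`
and vanishes only finitely often; put `s = t⁻¹` and rescale by `t` to get `A + t • diag v`.

*Linear relations.* Move in the direction of the constant potential `1`, which merely translates the
eigenvalues. A relation `∑ c_j (μ_j + s) ^ p = 0` with distinct `μ_j` has only isolated solutions:
if the sum vanished near some `s`, then so would all its derivatives, that is, every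
`∑ c_j (μ_j + s) ^ p (μ_j + s)⁻¹ ^ n`, as `p` is not a natural number, and the Vandermonde
determinant of the numbers `(μ_j + s)⁻¹` would force `c = 0`.

*Measurability.* A function between Polish spaces with a closed graph is Borel; the decreasingly
ordered eigenvalues have one, being characterised by their order and the characteristic polynomial.
-/

section Measure

theorem measurable_of_measurableSet_graph {X Y : Type*} [MeasurableSpace X] [StandardBorelSpace X]
    [MeasurableSpace Y] [StandardBorelSpace Y] {f : X → Y}
    (hf : MeasurableSet {p : X × Y | f p.1 = p.2}) : Measurable f := by
  intro s hs
  have himage : f ⁻¹' s = Prod.fst '' ({p : X × Y | f p.1 = p.2} ∩ Prod.snd ⁻¹' s) := by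
    ext x
    simp
  rw [himage]
  refine (hf.inter (measurable_snd hs)).image_of_measurable_injOn measurable_fst ?_
  rintro ⟨x, y⟩ ⟨hy : f x = y, -⟩ ⟨x', y'⟩ ⟨hy' : f x' = y', -⟩ (rfl : x = x')
  rw [← hy, ← hy']

theorem ae_notMem_of_countable_lines {E : Type*} [NormedAddCommGroup E] [NormedSpace ℝ E]
    [FiniteDimensional ℝ E] [MeasurableSpace E] [BorelSpace E] (μ : Measure E) [μ.IsAddHaarMeasure]
    {S : Set E} (hS : MeasurableSet S) (v : E) (h : ∀ x, {t : ℝ | x + t • v ∈ S}.Countable) :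
    ∀ᵐ x ∂μ, x ∉ S :=
  ae_mem_of_ae_add_linearMap_mem (LinearMap.toSpanSingleton ℝ E v) volume μ hS.compl
    fun x => (h x).ae_notMem volume

theorem measurableSet_setOfPred_injective {ι α : Type*} [Countable ι] [MeasurableSpace α]
    [MeasurableEq α] : MeasurableSet {g : ι → α | Function.Injective g} := by
  simp only [Function.Injective, Set.ofPred_forall]
  refine MeasurableSet.iInter fun i => MeasurableSet.iInter fun j => ?_
  exact (measurableSet_eq_fun (measurable_pi_apply i) (measurable_pi_apply j)).imp (.const _)

end Measure

section PowerSums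

open Filter Topology

variable {ι : Type*} [Fintype ι]

theorem eq_zero_of_forall_sum_mul_pow_eq_zero {R : Type*} [CommRing R] [IsDomain R] {x c : ι → R}
    (hx : Function.Injective x) (h : ∀ n : ℕ, ∑ j, c j * x j ^ n = 0) : c = 0 := by
  set e := Fintype.equivFin ι
  have hc : c ∘ e.symm = 0 := Matrix.eq_zero_of_forall_pow_sum_mul_pow_eq_zero
    (hx.comp e.symm.injective) fun n => (e.symm.sum_comp fun j => c j * x j ^ (n : ℕ)).trans (h n)
  exact (Equiv.comp_symm_eq e 0 c).1 hc

theorem hasDerivAt_sum_mul_rpow (c μ : ι → ℝ) (p : ℝ) {s : ℝ} (hs : ∀ j, 0 < μ j + s) :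
    HasDerivAt (fun t => ∑ j, c j * (μ j + t) ^ p) (p * ∑ j, c j * (μ j + s) ^ (p - 1)) s := by
  rw [Finset.mul_sum]
  refine HasDerivAt.fun_sum fun j _ => ?_
  have hpow : HasDerivAt (fun t => (μ j + t) ^ p) (1 * p * (μ j + s) ^ (p - 1)) s :=
    ((hasDerivAt_id s).const_add (μ j)).rpow_const (Or.inl (hs j).ne')
  exact (hpow.const_mul (c j)).congr_deriv (by ring)

theorem analyticAt_sum_mul_rpow (c μ : ι → ℝ) (p : ℝ) {s : ℝ} (hs : ∀ j, 0 < μ j + s) :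
    AnalyticAt ℝ (fun t => ∑ j, c j * (μ j + t) ^ p) s :=
  Finset.univ.analyticAt_fun_sum fun j _ => analyticAt_const.mul <|
    (Real.contDiffAt_rpow_const_of_ne (hs j).ne').analyticAt.comp
      (analyticAt_const.add analyticAt_id)

variable {c μ : ι → ℝ} {p : ℝ}

theorem eventually_sum_mul_rpow_sub_natCast_eq_zero (hp : ∀ n : ℕ, p ≠ n) {s : ℝ}
    (hs : ∀ j, 0 < μ j + s) (h : ∀ᶠ t in 𝓝 s, ∑ j, c j * (μ j + t) ^ p = 0) (n : ℕ) :
    ∀ᶠ t in 𝓝 s, ∑ j, c j * (μ j + t) ^ (p - n) = 0 := by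
  have hpos : ∀ᶠ t in 𝓝 s, ∀ j, 0 < μ j + t := eventually_all.2 fun j =>
    (continuous_const.add continuous_id).continuousAt.eventually_const_lt (hs j)
  induction n with
  | zero => simpa using h
  | succ n ih =>
    filter_upwards [ih.eventually_nhds, hpos] with t hzero ht
    have hderiv := (hasDerivAt_sum_mul_rpow c μ (p - n) ht).unique
      ((hasDerivAt_const t 0).congr_of_eventuallyEq hzero)
    rw [Nat.cast_succ, ← sub_sub]
    exact (mul_eq_zero.1 hderiv).resolve_left (sub_ne_zero.2 (hp n))

theorem eq_zero_of_eventually_sum_mul_rpow_eq_zero (hp : ∀ n : ℕ, p ≠ n)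
    (hμ : Function.Injective μ) {s : ℝ} (hs : ∀ j, 0 < μ j + s)
    (h : ∀ᶠ t in 𝓝 s, ∑ j, c j * (μ j + t) ^ p = 0) : c = 0 := by
  have hinj : Function.Injective fun j => (μ j + s)⁻¹ :=
    inv_injective.comp ((add_left_injective s).comp hμ)
  have hsum : ∀ n : ℕ, ∑ j, c j * (μ j + s) ^ p * (μ j + s)⁻¹ ^ n = 0 := fun n => by
    refine Eq.trans (Finset.sum_congr rfl fun j _ => ?_)
      (eventually_sum_mul_rpow_sub_natCast_eq_zero hp hs h n).self_of_nhds
    rw [Real.rpow_sub_natCast (hs j).ne', inv_pow, mul_assoc, div_eq_mul_inv]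
  have hzero := eq_zero_of_forall_sum_mul_pow_eq_zero hinj hsum
  exact funext fun j =>
    (mul_eq_zero.1 (congrFun hzero j)).resolve_right (Real.rpow_pos_of_pos (hs j) p).ne'

theorem countable_setOfPred_sum_mul_rpow_eq_zero (hp : ∀ n : ℕ, p ≠ n) (hμ : Function.Injective μ)
    (hc : c ≠ 0) : {s : ℝ | (∀ j, 0 < μ j + s) ∧ ∑ j, c j * (μ j + s) ^ p = 0}.Countable := by
  set S := {s : ℝ | (∀ j, 0 < μ j + s) ∧ ∑ j, c j * (μ j + s) ^ p = 0}
  have hisolated : ∀ s ∈ S, ∀ᶠ t in 𝓝[≠] s, t ∉ S := by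
    intro s hs
    rcases (analyticAt_sum_mul_rpow c μ p hs.1).eventually_eq_zero_or_eventually_ne_zero with h | h
    · exact absurd (eq_zero_of_eventually_sum_mul_rpow_eq_zero hp hμ hs.1 h) hc
    · exact h.mono fun t ht htS => ht htS.2
  have hdiscrete : IsDiscrete S := isDiscrete_iff_nhdsNE.2 fun s hs => by
    rw [← disjoint_iff, disjoint_principal_right]
    exact hisolated s hs
  exact (HereditarilyLindelofSpace.isLindelof S).countable_of_isDiscrete hdiscrete

end PowerSums

section Charpoly

open Polynomial

theorem charpoly_eq_prod_X_sub_C_iff {R ι n : Type*} [CommRing R] [IsDomain R] [Infinite R]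
    [Fintype ι] [Fintype n] [DecidableEq n] {A : Matrix n n R} {g : ι → R} :
    A.charpoly = ∏ i, (X - C (g i)) ↔ ∀ r, (scalar n r - A).det = ∏ i, (r - g i) := by
  refine ⟨fun h r => ?_, fun h => Polynomial.funext fun r => ?_⟩
  · rw [← eval_charpoly, h]
    simp only [eval_prod, eval_sub, eval_X, eval_C]
  · simpa only [eval_charpoly, eval_prod, eval_sub, eval_X, eval_C] using h r

variable {K : Type*} [Field K]

theorem separable_iff_resultant_derivative_ne_zero {p : K[X]} (hp : p.Monic) :
    p.Separable ↔ resultant p (derivative p) p.natDegree (p.natDegree - 1) ≠ 0 := by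
  have hcoprime : p.Separable ↔ IsUnit (resultant p (derivative p)) :=
    (isUnit_resultant_iff_isCoprime hp).symm
  obtain ⟨k, hk⟩ := Nat.exists_eq_add_of_le (natDegree_derivative_le p)
  rw [hcoprime, hk, resultant_add_right_deg _ _ _ _ k le_rfl, hp.coeff_natDegree, one_pow, one_mul,
    isUnit_iff_ne_zero]

theorem finite_setOfPred_not_separable_map {p : K[X][X]} (hp : p.Monic) {s₀ : K}
    (h : (p.map (evalRingHom s₀)).Separable) :
    {s : K | ¬ (p.map (evalRingHom s)).Separable}.Finite := by
  set r : K[X] := resultant p (derivative p) p.natDegree (p.natDegree - 1)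
  have hr : ∀ s : K, (p.map (evalRingHom s)).Separable ↔ r.eval s ≠ 0 := fun s => by
    rw [separable_iff_resultant_derivative_ne_zero (hp.map _), hp.natDegree_map,
      derivative_map, resultant_map_map]
    rfl
  have hr0 : r ≠ 0 := fun hr0 => (hr s₀).1 h (by rw [hr0, eval_zero])
  simpa only [hr, not_not, IsRoot.def] using finite_setOfPred_isRoot hr0

theorem finite_setOfPred_not_separable_charpoly_smul_add {n : Type*} [Fintype n]
    [DecidableEq n] (A : Matrix n n K) {D : Matrix n n K}
    (hD : D.charpoly.Separable) : {s : K | ¬ (s • A + D).charpoly.Separable}.Finite := by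
  set P : Matrix n n K[X] := (X : K[X]) • A.map C + D.map C
  have hP : ∀ s : K, P.charpoly.map (evalRingHom s) = (s • A + D).charpoly := fun s => by
    rw [← Matrix.charpoly_map]
    congr 1
    ext i j
    simpa [P] using mul_comm (A i j) s
  have h0 := finite_setOfPred_not_separable_map (s₀ := 0) P.charpoly_monic (by simpa [hP] using hD)
  simpa only [hP] using h0

end Charpoly

section Eigenvalues

open Polynomial Function Pointwise

variable {𝕜 n : Type*} [RCLike 𝕜] [DecidableEq n]

theorem isHermitian_diagonal_ofReal (v : n → ℝ) : (diagonal fun i => (v i : 𝕜)).IsHermitian :=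
  isHermitian_diagonal_of_self_adjoint _ (funext fun _ => RCLike.conj_ofReal _)

variable [Fintype n] {A D : Matrix n n 𝕜}

theorem charpoly_eq_prod_eigenvalues₀ (hA : A.IsHermitian) :
    A.charpoly = ∏ i, (X - C (hA.eigenvalues₀ i : 𝕜)) := by
  rw [hA.charpoly_eq]
  exact (Fintype.equivOfCardEq (Fintype.card_fin _)).symm.prod_comp
    fun i => X - C (hA.eigenvalues₀ i : 𝕜)

theorem eigenvalues₀_eq_iff (hA : A.IsHermitian) {g : Fin (Fintype.card n) → ℝ} :
    hA.eigenvalues₀ = g ↔ Antitone g ∧ A.charpoly = ∏ i, (X - C (g i : 𝕜)) := by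
  refine ⟨?_, fun ⟨hg, hchar⟩ => List.ofFn_injective ?_⟩
  · rintro rfl
    exact ⟨hA.eigenvalues₀_antitone, charpoly_eq_prod_eigenvalues₀ hA⟩
  have hroots : A.charpoly.roots.map RCLike.re = List.ofFn g := by
    rw [hchar, roots_prod _ _ (Finset.prod_ne_zero_iff.2 fun i _ => X_sub_C_ne_zero _)]
    simp [Fin.univ_val_map, Function.comp_def]
  rw [← hA.sort_roots_charpoly_eq_eigenvalues₀, hroots, Multiset.coe_sort]
  exact List.mergeSort_of_pairwise (by simpa using hg.sortedGE_ofFn.pairwise)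

theorem measurable_eigenvalues {Y : Type*} [TopologicalSpace Y] [PolishSpace Y] [MeasurableSpace Y]
    [BorelSpace Y] {A : Y → Matrix n n 𝕜} (hA : ∀ x, (A x).IsHermitian) (hcont : Continuous A) :
    Measurable fun x => (hA x).eigenvalues := by
  suffices Measurable fun x => (hA x).eigenvalues₀ from
    measurable_pi_lambda _ fun i => (measurable_pi_apply _).comp this
  have hgraph : {p : Y × (Fin (Fintype.card n) → ℝ) | (hA p.1).eigenvalues₀ = p.2} =
      {p | Antitone p.2} ∩
        ⋂ r : 𝕜, {p | (scalar n r - A p.1).det = ∏ i, (r - (p.2 i : 𝕜))} := by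
    ext p
    simp only [eigenvalues₀_eq_iff, charpoly_eq_prod_X_sub_C_iff, Set.mem_ofPred_eq,
      Set.mem_inter_iff, Set.mem_iInter]
  refine measurable_of_measurableSet_graph (IsClosed.measurableSet ?_)
  rw [hgraph]
  refine (isClosed_antitone.preimage continuous_snd).inter (isClosed_iInter fun r => ?_)
  refine isClosed_eq (continuous_const.sub (hcont.comp continuous_fst)).matrix_det ?_
  fun_prop

theorem eigenvalues_add_smul_one (hA : A.IsHermitian) {s : ℝ} (hs : (A + s • 1).IsHermitian) :
    hs.eigenvalues = fun i => hA.eigenvalues i + s := by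
  have h : hs.eigenvalues₀ = fun i => hA.eigenvalues₀ i + s := by
    refine (eigenvalues₀_eq_iff hs).2
      ⟨fun i j hij => add_le_add_left (hA.eigenvalues₀_antitone hij) s, ?_⟩
    have hscalar : A + s • 1 = A - scalar n (-s : 𝕜) := by
      rw [map_neg, sub_neg_eq_add, RCLike.real_smul_eq_coe_smul (K := 𝕜), smul_one_eq_diagonal,
        scalar_apply]
    rw [hscalar, charpoly_sub_scalar, charpoly_eq_prod_eigenvalues₀ hA, Polynomial.prod_comp]
    refine Finset.prod_congr rfl fun i _ => ?_
    rw [sub_comp, X_comp, C_comp, RCLike.ofReal_add, map_add, map_neg]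
    ring
  exact funext fun i => congrFun h _

theorem injective_eigenvalues_iff_separable (hA : A.IsHermitian) :
    Injective hA.eigenvalues ↔ A.charpoly.Separable := by
  rw [hA.charpoly_eq, separable_prod_X_sub_C_iff]
  exact (RCLike.ofReal_injective.of_comp_iff _).symm

theorem injective_eigenvalues_diagonal {v : n → ℝ} (hv : Injective v) :
    Injective (isHermitian_diagonal_ofReal (𝕜 := 𝕜) v).eigenvalues := by
  rw [injective_eigenvalues_iff_separable, charpoly_diagonal, separable_prod_X_sub_C_iff]
  exact RCLike.ofReal_injective.comp hv

theorem injective_eigenvalues_iff_ncard_spectrum (hA : A.IsHermitian) :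
    Injective hA.eigenvalues ↔ (spectrum ℝ A).ncard = Fintype.card n := by
  rw [hA.spectrum_real_eq_range_eigenvalues, ← Set.image_univ, ← Nat.card_eq_fintype_card,
    ← Set.ncard_univ, Set.ncard_image_iff, Set.injOn_univ]

theorem injective_eigenvalues_smul_iff (hA : A.IsHermitian) {c : ℝ} (hc : c ≠ 0)
    (hcA : (c • A).IsHermitian) : Injective hcA.eigenvalues ↔ Injective hA.eigenvalues := by
  have hspec : spectrum ℝ (c • A) = c • spectrum ℝ A :=
    spectrum.unit_smul_eq_smul A (Units.mk0 c hc)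
  rw [injective_eigenvalues_iff_ncard_spectrum, injective_eigenvalues_iff_ncard_spectrum, hspec,
    ← Set.image_smul, Set.ncard_image_of_injective _ (smul_right_injective ℝ hc)]

theorem finite_setOfPred_not_injective_eigenvalues_add_smul
    (hA : ∀ t : ℝ, (A + t • D).IsHermitian) (hD : D.IsHermitian) (hinj : Injective hD.eigenvalues) :
    {t : ℝ | ¬ Injective (hA t).eigenvalues}.Finite := by
  have hfin : {s : ℝ | ¬ ((s : 𝕜) • A + D).charpoly.Separable}.Finite :=
    (finite_setOfPred_not_separable_charpoly_smul_add A
      ((injective_eigenvalues_iff_separable hD).1 hinj)).preimage RCLike.ofReal_injective.injOn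
  refine ((hfin.image (·⁻¹)).insert 0).subset fun t ht => ?_
  rcases eq_or_ne t 0 with rfl | ht0
  · exact Set.mem_insert 0 _
  refine Or.inr ⟨t⁻¹, fun hsep => ht ?_, inv_inv t⟩
  have hscale : ((t⁻¹ : ℝ) : 𝕜) • A + D = t⁻¹ • (A + t • D) := by
    rw [smul_add, inv_smul_smul₀ ht0, RCLike.real_smul_eq_coe_smul (K := 𝕜)]
  rw [hscale] at hsep
  have hH : (t⁻¹ • (A + t • D)).IsHermitian := (hA t).smul (IsSelfAdjoint.all _)
  exact (injective_eigenvalues_smul_iff (hA t) (inv_ne_zero ht0) hH).1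
    ((injective_eigenvalues_iff_separable hH).2 hsep)

end Eigenvalues

section RandomPotential

open Polynomial Function

variable {𝕜 n : Type*} [RCLike 𝕜] [DecidableEq n]

/-- The matrix `M + diag(k)`: the potential `k` added to the one-particle Hamiltonian `M`. -/
def addPotential (M : Matrix n n 𝕜) (k : n → ℝ) : Matrix n n 𝕜 :=
  M + diagonal fun i => (k i : 𝕜)

theorem continuous_addPotential (M : Matrix n n 𝕜) : Continuous (addPotential M) :=
  continuous_const.add (Continuous.matrix_diagonal (by fun_prop))

theorem addPotential_add_smul (M : Matrix n n 𝕜) (k v : n → ℝ) (t : ℝ) :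
    addPotential M (k + t • v) = addPotential M k + t • diagonal fun i => (v i : 𝕜) := by
  rw [addPotential, addPotential, add_assoc, ← diagonal_smul, diagonal_add]
  congr! 3 with i
  simp [RCLike.real_smul_eq_coe_mul]

theorem isHermitian_addPotential {M : Matrix n n 𝕜} (hM : M.IsHermitian) (k : n → ℝ) :
    (addPotential M k).IsHermitian :=
  hM.add (isHermitian_diagonal_ofReal k)

variable [Fintype n] {M : Matrix n n 𝕜} (hM : M.IsHermitian)

theorem measurable_eigenvalues_addPotential :
    Measurable fun k => (isHermitian_addPotential hM k).eigenvalues :=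
  measurable_eigenvalues (isHermitian_addPotential hM) (continuous_addPotential M)

theorem ae_injective_eigenvalues_addPotential :
    ∀ᵐ k : n → ℝ, Injective (isHermitian_addPotential hM k).eigenvalues := by
  obtain ⟨v, hv⟩ : ∃ v : n → ℝ, Injective v := by
    obtain ⟨f, hf⟩ := Countable.exists_injective_nat n
    exact ⟨fun i => f i, Nat.cast_injective.comp hf⟩
  have hmeas : MeasurableSet {k | ¬ Injective (isHermitian_addPotential hM k).eigenvalues} :=
    measurable_eigenvalues_addPotential hM measurableSet_setOfPred_injective.compl
  have hline : ∀ k : n → ℝ,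
      {t : ℝ | ¬ Injective (isHermitian_addPotential hM (k + t • v)).eigenvalues}.Countable := by
    intro k
    have hfin := finite_setOfPred_not_injective_eigenvalues_add_smul
      (fun t => addPotential_add_smul M k v t ▸ isHermitian_addPotential hM _)
      (isHermitian_diagonal_ofReal v) (injective_eigenvalues_diagonal hv)
    simpa only [injective_eigenvalues_iff_separable, addPotential_add_smul] using hfin.countable
  filter_upwards [ae_notMem_of_countable_lines volume hmeas v hline] with k hk
  exact not_not.1 hk

theorem eigenvalues_addPotential_add_smul_one (k : n → ℝ) (s : ℝ) :
    (isHermitian_addPotential hM (k + s • 1)).eigenvalues =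
      fun i => (isHermitian_addPotential hM k).eigenvalues i + s := by
  have hshift : addPotential M (k + s • 1) = addPotential M k + s • 1 := by
    simp [addPotential_add_smul]
  rw [← eigenvalues_add_smul_one _ (hshift ▸ isHermitian_addPotential hM _),
    IsHermitian.eigenvalues_eq_eigenvalues_iff, hshift]

variable {p : ℝ} (hp : ∀ m : ℕ, p ≠ m)
include hp

theorem ae_sum_mul_rpow_eigenvalues_addPotential_ne_zero {c : n → ℝ} (hc : c ≠ 0) :
    ∀ᵐ k : n → ℝ, (∀ j, 0 < (isHermitian_addPotential hM k).eigenvalues j) →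
      ∑ j, c j * (isHermitian_addPotential hM k).eigenvalues j ^ p ≠ 0 := by
  set S : Set (n → ℝ) := {g | Injective g ∧ (∀ j, 0 < g j) ∧ ∑ j, c j * g j ^ p = 0}
  have hS : MeasurableSet S := by
    have hpos : MeasurableSet {g : n → ℝ | ∀ j, 0 < g j} := by
      rw [Set.ofPred_forall]
      exact .iInter fun j => measurableSet_lt measurable_const (measurable_pi_apply j)
    exact measurableSet_setOfPred_injective.inter
      (hpos.inter (measurableSet_eq_fun (by fun_prop) measurable_const))
  have hline : ∀ k : n → ℝ, {s : ℝ | (isHermitian_addPotential hM (k + s • 1)).eigenvalues ∈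
      S}.Countable := fun k => by
    set μ := (isHermitian_addPotential hM k).eigenvalues
    have hshift : {s : ℝ | (isHermitian_addPotential hM (k + s • 1)).eigenvalues ∈ S} =
        {s | (fun j => μ j + s) ∈ S} := by
      ext s
      rw [Set.mem_ofPred_eq, eigenvalues_addPotential_add_smul_one hM]
      rfl
    rw [hshift]
    by_cases hμ : Injective μ
    · exact (countable_setOfPred_sum_mul_rpow_eq_zero hp hμ hc).mono fun s hs => hs.2
    · exact Set.countable_empty.mono fun s hs => hμ (hs.1.of_comp (f := (· + s)))
  filter_upwards [ae_injective_eigenvalues_addPotential hM, ae_notMem_of_countable_lines volume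
    (measurable_eigenvalues_addPotential hM hS) 1 hline] with k hinj hk hpos hsum
  exact hk ⟨hinj, hpos, hsum⟩

theorem ae_linearIndependent_rpow_eigenvalues_addPotential (K : Type*) [Field K] [Countable K]
    [Algebra K ℝ] :
    ∀ᵐ k : n → ℝ, (∀ j, 0 < (isHermitian_addPotential hM k).eigenvalues j) →
      LinearIndependent K fun j => (isHermitian_addPotential hM k).eigenvalues j ^ p := by
  have hae : ∀ᵐ k : n → ℝ, ∀ c : {c : n → K // c ≠ 0},
      (∀ j, 0 < (isHermitian_addPotential hM k).eigenvalues j) →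
      ∑ j, algebraMap K ℝ (c.1 j) * (isHermitian_addPotential hM k).eigenvalues j ^ p ≠ 0 :=
    ae_all_iff.2 fun c => ae_sum_mul_rpow_eigenvalues_addPotential_ne_zero hM hp fun h =>
      c.2 (funext fun j => (map_eq_zero _).1 (congrFun h j))
  filter_upwards [hae] with k hk hpos
  refine Fintype.linearIndependent_iff.2 fun c hc => congrFun (of_not_not fun hc0 => ?_)
  exact hk ⟨c, hc0⟩ hpos (by simpa only [Algebra.smul_def] using hc)

end RandomPotential

theorem injective_sum_mul_two_mul_add_one {ι R : Type*} [Fintype ι] [CommRing R] [IsDomain R]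
    [CharZero R] {γ : ι → R} (h : LinearIndependent ℕ γ) :
    Function.Injective fun α : ι → ℕ => ∑ j, γ j * (2 * (α j : R) + 1) := by
  have hsum : ∀ α : ι → ℕ, ∑ j, γ j * (2 * (α j : R) + 1) =
      2 * ∑ j, α j • γ j + ∑ j, γ j := fun α => by
    rw [Finset.mul_sum, ← Finset.sum_add_distrib]
    refine Finset.sum_congr rfl fun j _ => ?_
    rw [nsmul_eq_mul]
    ring
  simp only [hsum]
  exact ((add_left_injective _).comp (mul_right_injective₀ two_ne_zero)).comp
    (linearIndependent_iff_injective_fintypeLinearCombination.1 h)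

theorem almost_sure_simple_spectrum_general {𝕜 n : Type*} [RCLike 𝕜] [Fintype n] [DecidableEq n]
    {M : Matrix n n 𝕜} (hM : M.IsHermitian) {p : ℝ} (hp : ∀ m : ℕ, p ≠ m) (K : Type*) [Field K]
    [Countable K] [Algebra K ℝ] :
    ∀ᵐ k : n → ℝ, (∀ j, 0 < (isHermitian_addPotential hM k).eigenvalues j) →
      (Function.Injective fun α : n → ℕ =>
          ∑ j, (isHermitian_addPotential hM k).eigenvalues j ^ p * (2 * (α j : ℝ) + 1)) ∧
        LinearIndependent K fun j => (isHermitian_addPotential hM k).eigenvalues j ^ p := by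
  have : CharZero K :=
    ((algebraMap K ℝ).charZero_iff (algebraMap K ℝ).injective).2 inferInstance
  filter_upwards [ae_linearIndependent_rpow_eigenvalues_addPotential hM hp K] with k hlin hpos
  have hK := hlin hpos
  refine ⟨injective_sum_mul_two_mul_add_one (hK.restrict_scalars ?_), hK⟩
  simpa only [nsmul_one] using Nat.cast_injective

section BoxLaplacian

/-- The nearest-neighbour graph of the box. -/
def boxGraph : SimpleGraph (Box a b) where
  Adj x y := dist1 x.1 y.1 = 1
  symm := ⟨fun x y h => (dist1_comm y.1 x.1).trans h⟩
  loopless := ⟨fun x h => by simp [dist1] at h⟩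

theorem h0_eq_lapMatrix : h0 a b = (boxGraph a b).lapMatrix ℝ := by
  ext x y
  rw [SimpleGraph.lapMatrix, Matrix.sub_apply, SimpleGraph.degMatrix, diagonal_apply,
    SimpleGraph.adjMatrix_apply, h0]
  rcases eq_or_ne x y with rfl | hxy
  · rw [if_pos rfl, if_pos rfl, if_neg (boxGraph a b).irrefl, sub_zero,
      SimpleGraph.degree_eq_sum_if_adj, Finset.sum_boole]
    congr
  · by_cases hadj : dist1 x.1 y.1 = 1 <;> simp [hxy, boxGraph, hadj]

variable {a b} in
theorem posDef_effH {k : Box a b → ℝ} (hk : ∀ x, 0 < k x) : (effH a b k).PosDef := by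
  rw [effH, h0_eq_lapMatrix]
  exact PosDef.posSemidef_add ((boxGraph a b).posSemidef_lapMatrix ℝ) (.diagonal hk)

theorem gam_eq_rpow (j : Box a b) : gam a b k j =
    (isHermitian_addPotential (h0_isHermitian a b) k).eigenvalues j ^ (1 / 2 : ℝ) :=
  Real.sqrt_eq_rpow _

theorem one_half_ne_natCast (m : ℕ) : (1 / 2 : ℝ) ≠ m := fun h => by
  have : (1 : ℝ) = (m * 2 : ℕ) := by push_cast; linarith
  have : 1 = m * 2 := by exact_mod_cast this
  omega

end BoxLaplacian

/-- STATEMENT 14: for Lebesgue-almost every positive potential `k` the map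
`α ↦ Σ_j γ_j(k)(2α_j + 1)` is injective, i.e. the many-body oscillator Hamiltonian
`H(k)` has simple spectrum; equivalently the `γ_j(k)` are rationally independent. -/
theorem almost_sure_simple_spectrum {ν : ℕ} (hν : 1 ≤ ν) (a b : Fin ν → ℤ) :
    ∀ᵐ k ∂(volume : Measure (Box a b → ℝ)), (∀ x, 0 < k x) →
      (Function.Injective fun α : Box a b → ℕ =>
          ∑ j : Box a b, gam a b k j * (2 * (α j : ℝ) + 1)) ∧
        LinearIndependent ℚ fun j : Box a b => gam a b k j := by
  filter_upwards [almost_sure_simple_spectrum_general (h0_isHermitian a b) one_half_ne_natCast ℚ]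
    with k h hk using by simpa only [gam_eq_rpow] using h (posDef_effH hk).eigenvalues_pos

end OscLoc
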